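/- Let ω₁, ω₂ ∈ ℂ be linearly independent over ℝ and L = ℤω₁ + ℤω₂ the lattice they generate, ℘ the associated Weierstrass function and g₂ its first invariant. Then for every z ∈ ℂ with z ∉ L, the second derivative of ℘ satisfies ℘''(z) = 6℘(z)² − g₂/2. -/

import Mathlib

/-- The Weierstrass `℘`-function of the lattice `L = ℤω₁ + ℤω₂`:
`℘(z) = 1/z² + ∑_{ω ∈ L, ω ≠ 0} (1/(z−ω)² − 1/ω²)`. -/
noncomputable def weierstrassP (ω₁ ω₂ : ℂ) (z : ℂ) : ℂ :=
  1 / z ^ 2 + ∑' p : {q : ℤ × ℤ // q ≠ 0},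
    (1 / (z - ((p.1.1 : ℂ) * ω₁ + (p.1.2 : ℂ) * ω₂)) ^ 2 -
      1 / ((p.1.1 : ℂ) * ω₁ + (p.1.2 : ℂ) * ω₂) ^ 2)

/-- The first lattice invariant `g₂ = 60 ∑_{ω ∈ L, ω ≠ 0} ω⁻⁴`. -/
noncomputable def latticeG₂ (ω₁ ω₂ : ℂ) : ℂ :=
  60 * ∑' p : {q : ℤ × ℤ // q ≠ 0},
    1 / ((p.1.1 : ℂ) * ω₁ + (p.1.2 : ℂ) * ω₂) ^ 4

/-!
Differentiating `℘'² = 4℘³ - g₂℘ - g₃` gives `2℘'(℘'' - 6℘² + g₂/2) = 0` off the lattice. Since `℘'`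
has poles, it does not vanish identically, so its zeros are isolated. Hence `℘'' - 6℘² + g₂/2`
vanishes on a punctured neighbourhood of every point off the lattice, and by continuity at the point
itself.
-/

open Filter Topology
open scoped PeriodPair

theorem tsum_eq_add_tsum_ne {α M : Type*} [AddCommGroup M] [TopologicalSpace M]
    [IsTopologicalAddGroup M] [T2Space M] {f : α → M} (hf : Summable f) (a : α) :
    ∑' x, f x = f a + ∑' x : {x // x ≠ a}, f x := by
  classical
  have hne : ∑' x : {x // x ≠ a}, f x = ∑' x, Set.indicator {x | x ≠ a} f x := tsum_subtype _ f
  rw [hf.tsum_eq_add_tsum_ite a, hne]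
  simp only [Set.indicator_apply, Set.mem_ofPred_eq, ite_not]

section PeriodPair

variable (L : PeriodPair)

theorem tsum_lattice_eq_zero_add_tsum_ne_zero {M : Type*} [AddCommGroup M] [TopologicalSpace M]
    [IsTopologicalAddGroup M] [T2Space M] {f : ℂ → M} (hf : Summable fun l : L.lattice ↦ f l) :
    ∑' l : L.lattice, f l =
      f 0 + ∑' p : {q : ℤ × ℤ // q ≠ 0}, f (p.1.1 * L.ω₁ + p.1.2 * L.ω₂) := by
  have he (p : ℤ × ℤ) : f (L.latticeEquivProd.symm p) = f (p.1 * L.ω₁ + p.2 * L.ω₂) := by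
    rw [L.latticeEquiv_symm_apply]
  have hsum : Summable fun p : ℤ × ℤ ↦ f (p.1 * L.ω₁ + p.2 * L.ω₂) :=
    (L.latticeEquivProd.symm.toEquiv.summable_iff.mpr hf).congr he
  calc
    ∑' l : L.lattice, f l = ∑' p : ℤ × ℤ, f (L.latticeEquivProd.symm p) :=
      (L.latticeEquivProd.symm.toEquiv.tsum_eq fun l : L.lattice ↦ f l).symm
    _ = ∑' p : ℤ × ℤ, f (p.1 * L.ω₁ + p.2 * L.ω₂) := tsum_congr he
    _ = f 0 + ∑' p : {q : ℤ × ℤ // q ≠ 0}, f (p.1.1 * L.ω₁ + p.1.2 * L.ω₂) := by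
      simpa using tsum_eq_add_tsum_ne hsum 0

theorem weierstrassP_eq_periodPair : weierstrassP L.ω₁ L.ω₂ = ℘[L] := by
  ext z
  rw [PeriodPair.weierstrassP,
    tsum_lattice_eq_zero_add_tsum_ne_zero L (f := fun l ↦ 1 / (z - l) ^ 2 - 1 / l ^ 2)
      (L.hasSum_weierstrassP z).summable]
  simp [weierstrassP]

theorem latticeG₂_eq_periodPair : latticeG₂ L.ω₁ L.ω₂ = L.g₂ := by
  have hsum : Summable fun l : L.lattice ↦ ((l : ℂ) ^ 4)⁻¹ := by
    simpa only [sub_zero] using (L.hasSum_sumInvPow 0 (r := 4) (by norm_num)).summable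
  rw [PeriodPair.g₂, PeriodPair.G,
    tsum_lattice_eq_zero_add_tsum_ne_zero L (f := fun l ↦ (l ^ 4)⁻¹) hsum]
  simp [latticeG₂]

theorem meromorphicOrderAt_derivWeierstrassP {l : ℂ} (hl : l ∈ L.lattice) :
    meromorphicOrderAt ℘'[L] l = -3 := by
  rw [← L.deriv_weierstrassP]
  exact meromorphicOrderAt_deriv_eq_sub_one (n := -2) (by norm_num) (L.order_weierstrassP l hl)

theorem eventually_derivWeierstrassP_ne_zero (z : ℂ) : ∀ᶠ w in 𝓝[≠] z, ℘'[L] w ≠ 0 := by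
  have hmero := L.meromorphic_derivWeierstrassP
  rw [← meromorphicOrderAt_ne_top_iff_eventually_ne_zero (hmero z)]
  refine hmero.meromorphicOn.meromorphicOrderAt_ne_top_of_isPreconnected (x := 0)
    isPreconnected_univ (Set.mem_univ _) (Set.mem_univ _) ?_
  rw [meromorphicOrderAt_derivWeierstrassP L L.lattice.zero_mem]
  decide

variable {z : ℂ} (hz : z ∉ L.lattice)
include hz

theorem eventually_notMem_lattice : ∀ᶠ w in 𝓝 z, w ∉ L.lattice :=
  L.isClosed_lattice.isOpen_compl.mem_nhds hz

theorem hasDerivAt_periodPair_weierstrassP : HasDerivAt ℘[L] (℘'[L] z) z := by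
  rw [← L.deriv_weierstrassP]
  exact (L.analyticOnNhd_weierstrassP z hz).differentiableAt.hasDerivAt

theorem derivWeierstrassP_mul_deriv_derivWeierstrassP :
    ℘'[L] z * deriv ℘'[L] z = ℘'[L] z * (6 * ℘[L] z ^ 2 - L.g₂ / 2) := by
  have hP := hasDerivAt_periodPair_weierstrassP L hz
  have hP' := (L.analyticOnNhd_derivWeierstrassP z hz).differentiableAt.hasDerivAt
  have hcubic := (((hP.pow 3).const_mul 4).sub (hP.const_mul L.g₂)).sub_const L.g₃
  have hode : ℘'[L] ^ 2 =ᶠ[𝓝 z] fun w ↦ 4 * ℘[L] w ^ 3 - L.g₂ * ℘[L] w - L.g₃ :=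
    (eventually_notMem_lattice L hz).mono L.derivWeierstrassP_sq
  have hderiv : 2 * ℘'[L] z * deriv ℘'[L] z =
      4 * (3 * ℘[L] z ^ 2 * ℘'[L] z) - L.g₂ * ℘'[L] z := by
    simpa only [Nat.cast_ofNat, Nat.reduceSub, pow_one] using
      (hP'.pow 2).unique (hcubic.congr_of_eventuallyEq hode)
  linear_combination hderiv / 2

theorem deriv_derivWeierstrassP : deriv ℘'[L] z = 6 * ℘[L] z ^ 2 - L.g₂ / 2 := by
  have hcont : ContinuousAt (deriv ℘'[L]) z :=
    (L.analyticOnNhd_derivWeierstrassP.deriv z hz).continuousAt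
  have hcont' : ContinuousAt (fun w ↦ 6 * ℘[L] w ^ 2 - L.g₂ / 2) z := by
    have := (hasDerivAt_periodPair_weierstrassP L hz).continuousAt
    fun_prop
  have heq : deriv ℘'[L] =ᶠ[𝓝[≠] z] fun w ↦ 6 * ℘[L] w ^ 2 - L.g₂ / 2 := by
    filter_upwards [eventually_derivWeierstrassP_ne_zero L z,
      nhdsWithin_le_nhds (eventually_notMem_lattice L hz)] with w hw hwL
    exact mul_left_cancel₀ hw (derivWeierstrassP_mul_deriv_derivWeierstrassP L hwL)
  exact ((hcont.eventuallyEq_nhds_iff_eventuallyEq_nhdsNE hcont').mp heq).eq_of_nhds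

end PeriodPair

/-- **Second-order Weierstrass differential equation.**
If `ω₁, ω₂` are linearly independent over `ℝ` and `z` is not in the lattice
`L = ℤω₁ + ℤω₂`, then `℘''(z) = 6 ℘(z)² − g₂/2`. -/
theorem weierstrassP_second_deriv (ω₁ ω₂ : ℂ)
    (hind : LinearIndependent ℝ ![ω₁, ω₂]) (z : ℂ)
    (hz : ∀ m n : ℤ, z ≠ (m : ℂ) * ω₁ + (n : ℂ) * ω₂) :
    iteratedDeriv 2 (weierstrassP ω₁ ω₂) z =
      6 * weierstrassP ω₁ ω₂ z ^ 2 - latticeG₂ ω₁ ω₂ / 2 := by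
  let L : PeriodPair := ⟨ω₁, ω₂, hind⟩
  have hzL : z ∉ L.lattice := fun h ↦ by
    obtain ⟨m, n, hmn⟩ := PeriodPair.mem_lattice.mp h
    exact hz m n hmn.symm
  have hP : weierstrassP ω₁ ω₂ = ℘[L] := weierstrassP_eq_periodPair L
  have hg₂ : latticeG₂ ω₁ ω₂ = L.g₂ := latticeG₂_eq_periodPair L
  rw [hP, hg₂, iteratedDeriv_succ, iteratedDeriv_one, L.deriv_weierstrassP]
  exact deriv_derivWeierstrassP L hzL
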